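/- The quadratic relation between F4 and F2: F4(a/2; (a+1)/2; b1+1/2, b2+1/2; x^2, y^2) = (1+x+y)^{-a} F2(a; b1, b2; 2b1, 2b2; 2x/(x+y+1), 2y/(x+y+1)), as an identity of analytic functions near (x,y)=(0,0). -/

import Mathlib

/-!
Expand each `(1+x+y)^(-a-n-m)` occurring on the right-hand side by the binomial series in `x` and
`y` (`hasSum_binom_two`). Since `(a)_{n+m} (a+n+m)_{k+l} = (a)_{n+m+k+l}`, the resulting quadruple
series has the term `(a)_{n+m+k+l}` times a function of `(n, k)` times a function of `(m, l)`.
It converges absolutely near the origin (`summable_quadTerm`), so it may be regrouped by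
`N = n + k` and `M = m + l`. This gives `∑ (a)_{N+M} u_N(b1) u_M(b2) x^N y^M`, where `u_N(b)` is
the `N`-th Taylor coefficient of `exp (-x) * ₁F₁(b; 2b; 2x)`.

By Kummer's second formula this function equals `₀F₁(b + 1/2; x² / 4)`; it is obtained here from
the differential equation `x F'' + 2b F' - x F = 0` (`kummer_ode`), which gives a two-step
recurrence for `u_N`. Hence `u_N` vanishes for odd `N` and `4^n u_{2n} = 1 / ((b + 1/2)_n n!)`,
and the duplication `(a)_{2n} = 4^n (a/2)_n ((a+1)/2)_n` turns the series into `F4`.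
-/


noncomputable def poch (a : ℂ) (n : ℕ) : ℂ := (ascPochhammer ℂ n).eval a

noncomputable def hpg21 (A B C z : ℂ) : ℂ :=
  ∑' n : ℕ, poch A n * poch B n / (poch C n * (n.factorial : ℂ)) * z ^ n

noncomputable def F2 (a b1 b2 c1 c2 x y : ℂ) : ℂ :=
  ∑' p : ℕ × ℕ, poch a (p.1 + p.2) * poch b1 p.1 * poch b2 p.2 /
    (poch c1 p.1 * poch c2 p.2 * (p.1.factorial : ℂ) * (p.2.factorial : ℂ)) * x ^ p.1 * y ^ p.2

noncomputable def F4 (a b c1 c2 x y : ℂ) : ℂ :=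
  ∑' p : ℕ × ℕ, poch a (p.1 + p.2) * poch b (p.1 + p.2) /
    (poch c1 p.1 * poch c2 p.2 * (p.1.factorial : ℂ) * (p.2.factorial : ℂ)) * x ^ p.1 * y ^ p.2

/-- The `n`-th Taylor coefficient of `₁F₁(b; 2b; 2x)` in `x`. -/
noncomputable def kc (b : ℂ) (n : ℕ) : ℂ :=
  poch b n * 2 ^ n / (poch (2 * b) n * (n.factorial : ℂ))

/-- The `n`-th Taylor coefficient of `exp (-x)`. -/
noncomputable def ec (n : ℕ) : ℂ := (-1) ^ n / (n.factorial : ℂ)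

open Finset in
/-- The `N`-th Taylor coefficient of `exp (-x) * ₁F₁(b; 2b; 2x)`, as a Cauchy product. -/
noncomputable def kummerCoeff (b : ℂ) (N : ℕ) : ℂ :=
  ∑ p ∈ antidiagonal N, kc b p.1 * ec p.2

/-! ### Pochhammer symbols -/

theorem poch_zero (a : ℂ) : poch a 0 = 1 := by simp [poch]

theorem poch_succ (a : ℂ) (n : ℕ) : poch a (n + 1) = poch a n * (a + n) := by
  simp [poch, ascPochhammer_succ_eval]

theorem poch_add (a : ℂ) (n m : ℕ) : poch a (n + m) = poch a n * poch (a + n) m := by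
  induction m with
  | zero => simp [poch_zero]
  | succ m ih => rw [← add_assoc, poch_succ, ih, poch_succ]; push_cast; ring

theorem poch_ne_zero {a : ℂ} (h : ∀ n : ℕ, a ≠ -(n : ℂ)) (n : ℕ) : poch a n ≠ 0 := by
  induction n with
  | zero => simp [poch_zero]
  | succ n ih =>
    rw [poch_succ]
    exact mul_ne_zero ih fun h0 => h n (eq_neg_of_add_eq_zero_left h0)

theorem poch_two_mul (a : ℂ) (n : ℕ) :
    poch a (2 * n) = 4 ^ n * poch (a / 2) n * poch ((a + 1) / 2) n := by
  induction n with
  | zero => simp [poch_zero]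
  | succ n ih =>
    rw [show 2 * (n + 1) = 2 * n + 1 + 1 by ring, poch_succ, poch_succ, ih, poch_succ, poch_succ]
    push_cast; ring

/-! ### Kummer's second formula -/

/-- Kummer's differential equation for `₁F₁(b; 2b; 2x)`, read off on coefficients. -/
theorem kc_succ {b : ℂ} (h : ∀ n : ℕ, 2 * b ≠ -(n : ℂ)) (n : ℕ) :
    ((n : ℂ) + 1) * (2 * b + n) * kc b (n + 1) = 2 * (b + n) * kc b n := by
  have h1 := poch_ne_zero h n
  have h2 : 2 * b + n ≠ 0 := fun h0 => h n (eq_neg_of_add_eq_zero_left h0)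
  have h3 : (n.factorial : ℂ) ≠ 0 := by exact_mod_cast n.factorial_ne_zero
  have h4 : (n : ℂ) + 1 ≠ 0 := by exact_mod_cast n.succ_ne_zero
  simp only [kc, poch_succ, Nat.factorial_succ]
  push_cast
  field_simp
  ring

theorem ec_succ (n : ℕ) : ec (n + 1) * ((n : ℂ) + 1) = - ec n := by
  have h3 : (n.factorial : ℂ) ≠ 0 := by exact_mod_cast n.factorial_ne_zero
  have h4 : (n : ℂ) + 1 ≠ 0 := by exact_mod_cast n.succ_ne_zero
  simp only [ec, Nat.factorial_succ]
  push_cast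
  field_simp
  ring

open PowerSeries in
/-- The formal power series `F = exp (-x) * ₁F₁(b; 2b; 2x)` satisfies the Bessel-type equation
`x F'' + 2b F' - x F = 0`, which is invariant under `x ↦ -x`. -/
theorem kummer_ode {b : ℂ} (h : ∀ n : ℕ, 2 * b ≠ -(n : ℂ)) :
    X * d⁄dX ℂ (d⁄dX ℂ (mk (kummerCoeff b))) + C (2 * b) * d⁄dX ℂ (mk (kummerCoeff b))
      - X * mk (kummerCoeff b) = 0 := by
  have hF : mk (kummerCoeff b) = mk (kc b) * mk ec := by
    ext n; simp [coeff_mul, kummerCoeff]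
  have hE : d⁄dX ℂ (mk ec) = - mk ec := by
    ext n; simp [coeff_derivative, ec_succ]
  have hG : X * d⁄dX ℂ (d⁄dX ℂ (mk (kc b))) + C (2 * b) * d⁄dX ℂ (mk (kc b))
      - 2 * (X * d⁄dX ℂ (mk (kc b))) - C (2 * b) * mk (kc b) = 0 := by
    have h2 : (2 : ℂ⟦X⟧) = C 2 := (map_ofNat C 2).symm
    ext n
    have := kc_succ h n
    rw [h2]
    rcases n with _ | n
    · simp only [map_sub, map_add, coeff_C_mul, coeff_zero_X_mul, coeff_derivative, coeff_mk]
      push_cast at this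
      simp only [map_zero, zero_add]
      linear_combination this
    · simp only [map_sub, map_add, coeff_C_mul, coeff_succ_X_mul, coeff_derivative, coeff_mk]
      simp only [map_zero]
      push_cast at this ⊢
      linear_combination this
  rw [hF]
  simp only [Derivation.leibniz, map_add, hE, map_neg, smul_eq_mul]
  linear_combination mk ec * hG

theorem kummerCoeff_one {b : ℂ} (h : ∀ n : ℕ, 2 * b ≠ -(n : ℂ)) : kummerCoeff b 1 = 0 := by
  have := congrArg (PowerSeries.coeff 0) (kummer_ode h)
  have hb : 2 * b ≠ 0 := by simpa using h 0
  simp only [map_sub, map_add, PowerSeries.coeff_C_mul, PowerSeries.coeff_zero_X_mul,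
    PowerSeries.coeff_derivative, PowerSeries.coeff_mk, map_zero] at this
  have h' : 2 * b * kummerCoeff b 1 = 0 := by
    push_cast at this
    linear_combination this
  exact (mul_eq_zero.1 h').resolve_left hb

theorem kummerCoeff_rec {b : ℂ} (h : ∀ n : ℕ, 2 * b ≠ -(n : ℂ)) (n : ℕ) :
    ((n : ℂ) + 2) * (2 * b + n + 1) * kummerCoeff b (n + 2) = kummerCoeff b n := by
  have := congrArg (PowerSeries.coeff (n + 1)) (kummer_ode h)
  simp only [map_sub, map_add, PowerSeries.coeff_C_mul, PowerSeries.coeff_succ_X_mul,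
    PowerSeries.coeff_derivative, PowerSeries.coeff_mk, map_zero] at this
  push_cast at this
  linear_combination this

/-- First half of Kummer's second formula: `exp (-x) * ₁F₁(b; 2b; 2x)` is even. -/
theorem kummerCoeff_odd {b : ℂ} (h : ∀ n : ℕ, 2 * b ≠ -(n : ℂ)) (n : ℕ) :
    kummerCoeff b (2 * n + 1) = 0 := by
  induction n with
  | zero => simpa using kummerCoeff_one h
  | succ n ih =>
    have h1 := kummerCoeff_rec h (2 * n + 1)
    rw [ih] at h1
    have h2 : ((2 * n + 1 : ℕ) : ℂ) + 2 ≠ 0 := by norm_cast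
    have h3 : 2 * b + ((2 * n + 1 : ℕ) : ℂ) + 1 ≠ 0 := fun h0 => h (2 * n + 2) <| by
      push_cast at h0 ⊢; linear_combination h0
    rw [show 2 * (n + 1) + 1 = 2 * n + 1 + 2 by ring]
    exact (mul_eq_zero.1 h1).resolve_left (mul_ne_zero h2 h3)

/-- Second half of Kummer's second formula:
`exp (-x) * ₁F₁(b; 2b; 2x) = ₀F₁(b + 1/2; x² / 4)`. -/
theorem kummerCoeff_even {b : ℂ} (h : ∀ n : ℕ, 2 * b ≠ -(n : ℂ))
    (h' : ∀ n : ℕ, b + 1 / 2 ≠ -(n : ℂ)) (n : ℕ) :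
    4 ^ n * kummerCoeff b (2 * n) = 1 / (poch (b + 1 / 2) n * (n.factorial : ℂ)) := by
  induction n with
  | zero => simp [kummerCoeff, kc, ec, poch_zero]
  | succ n ih =>
    have h1 := kummerCoeff_rec h (2 * n)
    have h4 := poch_ne_zero h' n
    have h2 : b + 1 / 2 + n ≠ 0 := fun h0 => h' n (eq_neg_of_add_eq_zero_left h0)
    have h3 : (n.factorial : ℂ) ≠ 0 := by exact_mod_cast n.factorial_ne_zero
    have h5 : (n : ℂ) + 1 ≠ 0 := by exact_mod_cast n.succ_ne_zero
    rw [← h1, eq_div_iff (mul_ne_zero h4 h3)] at ih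
    rw [show 2 * (n + 1) = 2 * n + 2 by ring, poch_succ, Nat.factorial_succ, eq_div_iff
      (by push_cast; exact mul_ne_zero (mul_ne_zero h4 h2) (mul_ne_zero h5 h3))]
    push_cast at ih ⊢
    linear_combination ih

/-! ### The binomial series in two variables -/

theorem choose_neg_eq (s : ℂ) (n : ℕ) :
    Ring.choose (-s) n = (-1) ^ n * poch s n / (n.factorial : ℂ) := by
  rw [Ring.choose_eq_smul, Polynomial.descPochhammer_smeval_eq_ascPochhammer,
    Polynomial.ascPochhammer_smeval_cast, Polynomial.ascPochhammer_smeval_eq_eval]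
  have := ascPochhammer_eval_neg_eq_descPochhammer (R := ℂ) (-s) n
  rw [neg_neg, descPochhammer_eval_eq_ascPochhammer] at this
  rw [poch, this, ← mul_assoc, ← mul_pow]
  simp
  ring

theorem binom_fiber (x y : ℂ) (n : ℕ) :
    ∑ q ∈ Finset.HasAntidiagonal.antidiagonal n, x ^ q.1 * y ^ q.2 / ((q.1.factorial : ℂ) * (q.2.factorial : ℂ))
      = (x + y) ^ n / (n.factorial : ℂ) := by
  rw [(Commute.all x y).add_pow', Finset.sum_div]
  refine Finset.sum_congr rfl fun q hq => ?_
  obtain rfl := Finset.HasAntidiagonal.mem_antidiagonal.1 hq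
  have h1 : (q.1.factorial : ℂ) ≠ 0 := by exact_mod_cast q.1.factorial_ne_zero
  have h2 : (q.2.factorial : ℂ) ≠ 0 := by exact_mod_cast q.2.factorial_ne_zero
  have h3 : ((q.1 + q.2).factorial : ℂ) ≠ 0 := by exact_mod_cast (q.1 + q.2).factorial_ne_zero
  have h : (q.1 + q.2).choose q.1 * q.1.factorial * q.2.factorial = (q.1 + q.2).factorial := by
    rw [Nat.choose_symm_add, Nat.add_choose_mul_factorial_mul_factorial]
  rw [nsmul_eq_mul, ← h]
  have h4 : ((q.1 + q.2).choose q.1 : ℂ) ≠ 0 := by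
    exact_mod_cast (Nat.choose_pos (Nat.le_add_right _ _)).ne'
  push_cast
  field_simp

theorem hasSum_binom_one (s w : ℂ) (hw : ‖w‖ < 1) :
    HasSum (fun n => (-1) ^ n * poch s n / (n.factorial : ℂ) * w ^ n) ((1 + w) ^ (-s)) := by
  have := (Complex.one_add_cpow_hasFPowerSeriesOnBall_zero (a := -s)).hasSum
    (y := w) (by
      rw [mem_eball_zero_iff, ← ofReal_norm]; exact ENNReal.ofReal_lt_one.2 hw)
  simp only [zero_add, binomialSeries_apply, choose_neg_eq] at this
  simpa using this

/-- Absolute convergence of the binomial series at the radius `r < 1`. -/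
theorem summable_binom_one (s : ℂ) (r : ℝ) (hr : 0 ≤ r) (hw : r < 1) :
    Summable (fun n => ‖poch s n‖ * (r ^ n / (n.factorial : ℝ))) := by
  have := (binomialSeries ℂ (-s)).summable_norm_apply (x := (r : ℂ)) (by
    have : ‖(r : ℂ)‖ₑ < 1 := by
      rw [← ofReal_norm]; simpa [abs_of_nonneg hr] using hw
    rw [mem_eball_zero_iff]
    exact this.trans_le binomialSeries_radius_ge_one)
  simp only [binomialSeries_apply, choose_neg_eq] at this
  convert this using 2 with n
  simp [abs_of_nonneg hr]
  ring

/-- The expansion of `(1 + x + y) ^ (-s)` in powers of `x` and `y`, with the same domain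
`‖x‖ + ‖y‖ < 1` for every exponent `s`. -/
theorem hasSum_binom_two (s x y : ℂ) (h : ‖x‖ + ‖y‖ < 1) :
    HasSum (fun q : ℕ × ℕ => poch s (q.1 + q.2) * (ec q.1 * ec q.2) * (x ^ q.1 * y ^ q.2))
      ((1 + x + y) ^ (-s)) := by
  set f := fun q : ℕ × ℕ => poch s (q.1 + q.2) * (ec q.1 * ec q.2) * (x ^ q.1 * y ^ q.2) with hf
  have hsum : Summable f := by
    rw [← Finset.HasAntidiagonal.sigmaAntidiagonalEquivProd.summable_iff]
    refine Summable.of_norm ?_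
    rw [summable_sigma_of_nonneg (fun _ => norm_nonneg _)]
    refine ⟨fun n => (hasSum_fintype _).summable, ?_⟩
    convert summable_binom_one s (‖x‖ + ‖y‖) (by positivity) h using 2 with n
    have hb := binom_fiber (‖x‖ : ℂ) (‖y‖ : ℂ) n
    have hb' : ∑ q ∈ Finset.HasAntidiagonal.antidiagonal n,
        ‖x‖ ^ q.1 * ‖y‖ ^ q.2 / ((q.1.factorial : ℝ) * (q.2.factorial : ℝ))
        = (‖x‖ + ‖y‖) ^ n / (n.factorial : ℝ) := by exact_mod_cast hb
    rw [tsum_fintype, ← hb', Finset.mul_sum]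
    rw [Finset.univ_eq_attach, ← Finset.sum_attach (Finset.HasAntidiagonal.antidiagonal n)]
    refine Finset.sum_congr rfl fun q _ => ?_
    have hq := Finset.HasAntidiagonal.mem_antidiagonal.1 q.2
    simp [hf, ec, hq]
    ring
  have h2 : HasSum (f ∘ Finset.HasAntidiagonal.sigmaAntidiagonalEquivProd) (∑' q, f q) :=
    (Equiv.hasSum_iff _).2 hsum.hasSum
  -- Summing `f` along antidiagonals turns it into the binomial series in `x + y`.
  have h3 := h2.sigma (fun n => hasSum_fintype _)
  have h4 := hasSum_binom_one s (x + y) ((norm_add_le _ _).trans_lt h)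
  have : (1 + x + y) ^ (-s) = ∑' q, f q := by
    rw [add_assoc]
    refine h4.unique ?_
    convert h3 using 2 with n
    rw [mul_div_right_comm, mul_comm ((-1) ^ n / _), mul_assoc, div_mul_eq_mul_div, ← mul_pow,
      show -1 * (x + y) = -x + -y by ring, ← binom_fiber, Finset.mul_sum]
    rw [Finset.univ_eq_attach, ← Finset.sum_attach (Finset.HasAntidiagonal.antidiagonal n)]
    refine Finset.sum_congr rfl fun q _ => ?_
    have hq := Finset.HasAntidiagonal.mem_antidiagonal.1 q.2
    simp [hf, ec, hq, neg_pow x, neg_pow y]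
    ring
  rw [this]
  exact hsum.hasSum

/-! ### Absolute convergence of the quadruple series -/

theorem norm_poch_le (a : ℂ) (n : ℕ) : ‖poch a n‖ ≤ (‖a‖ + 1) ^ n * (n.factorial : ℝ) := by
  induction n with
  | zero => simp [poch_zero]
  | succ n ih =>
    have h1 : ‖a + n‖ ≤ (‖a‖ + 1) * (n + 1) := by
      have h2 : ‖a + n‖ ≤ ‖a‖ + n := (norm_add_le _ _).trans (by simp)
      nlinarith [norm_nonneg a, (Nat.cast_nonneg n : (0 : ℝ) ≤ n),
        mul_nonneg (norm_nonneg a) (Nat.cast_nonneg n : (0 : ℝ) ≤ n)]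
    rw [poch_succ, norm_mul, Nat.factorial_succ]
    calc ‖poch a n‖ * ‖a + n‖
        ≤ ((‖a‖ + 1) ^ n * (n.factorial : ℝ)) * ((‖a‖ + 1) * (n + 1)) := by gcongr
      _ = _ := by push_cast; ring

theorem exists_kc_bound {b : ℂ} (h : ∀ n : ℕ, 2 * b ≠ -(n : ℂ)) :
    ∃ K : ℝ, 0 ≤ K ∧ ∀ n, ‖kc b n‖ ≤ K ^ n / (n.factorial : ℝ) := by
  have hne : ∀ n : ℕ, 2 * b + n ≠ 0 := fun n h0 => h n (eq_neg_of_add_eq_zero_left h0)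
  have ht : Filter.Tendsto (fun n : ℕ => ‖2 * b + n‖) Filter.atTop Filter.atTop := by
    refine Filter.tendsto_atTop_mono (f := fun n : ℕ => (n : ℝ) + -‖2 * b‖) (fun n => ?_)
      (Filter.tendsto_atTop_add_const_right _ _ tendsto_natCast_atTop_atTop)
    have := norm_sub_le (2 * b + n) (2 * b)
    rw [add_sub_cancel_left, Complex.norm_natCast] at this
    linarith
  obtain ⟨M, hM⟩ := (Filter.Tendsto.inv_tendsto_atTop ht).bddAbove_range
  have hM' : ∀ n : ℕ, ‖2 * b + n‖⁻¹ ≤ M := fun n => hM ⟨n, rfl⟩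
  have hM0 : 0 ≤ M := (inv_nonneg.2 (norm_nonneg _)).trans (hM' 0)
  -- `2 (b + n) / (2b + n) = 2 - 2b / (2b + n)` is bounded in `n`.
  refine ⟨2 + ‖2 * b‖ * M, by positivity, fun n => ?_⟩
  induction n with
  | zero => simp [kc, poch_zero]
  | succ n ih =>
    have h4 : (n : ℂ) + 1 ≠ 0 := by exact_mod_cast n.succ_ne_zero
    have hk : kc b (n + 1) = (2 - 2 * b * (2 * b + n)⁻¹) * kc b n / (n + 1) := by
      have := kc_succ h n
      have h5 := hne n
      field_simp
      linear_combination this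
    have h6 : ‖2 - 2 * b * (2 * b + n)⁻¹‖ ≤ 2 + ‖2 * b‖ * M := by
      refine (norm_sub_le _ _).trans ?_
      rw [norm_mul (2 * b) (2 * b + n)⁻¹, norm_inv]
      have := mul_le_mul_of_nonneg_left (hM' n) (norm_nonneg (2 * b))
      simpa using this
    have h7 : ‖(n : ℂ) + 1‖ = n + 1 := by exact_mod_cast Complex.norm_natCast (n + 1)
    rw [hk, norm_div, norm_mul, h7, Nat.factorial_succ]
    calc ‖2 - 2 * b * (2 * b + n)⁻¹‖ * ‖kc b n‖ / (n + 1)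
        ≤ (2 + ‖2 * b‖ * M) * ((2 + ‖2 * b‖ * M) ^ n / (n.factorial : ℝ)) / (n + 1) := by gcongr
      _ = _ := by push_cast; rw [pow_succ]; field_simp

theorem factorial_add_le (n m : ℕ) :
    (n + m).factorial ≤ 2 ^ (n + m) * (n.factorial * m.factorial) := by
  rw [← Nat.add_choose_mul_factorial_mul_factorial, mul_assoc]
  exact Nat.mul_le_mul_right _ (Nat.choose_le_two_pow _ _)

theorem factorial_add_four_le (n m k l : ℕ) :
    (n + m + (k + l)).factorial ≤
      4 ^ (n + m + (k + l)) * (n.factorial * m.factorial * (k.factorial * l.factorial)) :=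
  calc (n + m + (k + l)).factorial
      ≤ 2 ^ (n + m + (k + l)) * ((n + m).factorial * (k + l).factorial) := factorial_add_le _ _
    _ ≤ 2 ^ (n + m + (k + l)) * ((2 ^ (n + m) * (n.factorial * m.factorial)) *
          (2 ^ (k + l) * (k.factorial * l.factorial))) := by
        gcongr <;> exact factorial_add_le _ _
    _ = _ := by
        rw [show 4 = 2 * 2 by norm_num, mul_pow, pow_add 2 (n + m) (k + l)]; ring

/-- The general term of the quadruple series obtained from `(1+x+y)^(-a) F2(...)` by expanding
every power of `1+x+y`. The index is `((n, m), (k, l))`: `n, m` are the summation indices of `F2`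
and `k, l` those of the binomial expansion. -/
noncomputable def quadTerm (a b1 b2 x y : ℂ) (p : (ℕ × ℕ) × (ℕ × ℕ)) : ℂ :=
  poch a (p.1.1 + p.1.2 + (p.2.1 + p.2.2)) * (kc b1 p.1.1 * kc b2 p.1.2) *
    (ec p.2.1 * ec p.2.2) * (x ^ p.1.1 * y ^ p.1.2) * (x ^ p.2.1 * y ^ p.2.2)

theorem summable_half : Summable fun p : (ℕ × ℕ) × (ℕ × ℕ) =>
    (1 / 2 : ℝ) ^ (p.1.1 + p.1.2 + (p.2.1 + p.2.2)) := by
  have h1 : Summable fun n : ℕ => (1 / 2 : ℝ) ^ n := summable_geometric_two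
  have h2 := h1.mul_of_nonneg h1 (fun _ => by positivity) (fun _ => by positivity)
  have h4 := h2.mul_of_nonneg h2 (fun _ => by positivity) (fun _ => by positivity)
  simpa only [pow_add] using h4

/-- The quadruple series is dominated by `(4 (‖a‖ + 1) K ε) ^ (n + m + k + l)`. -/
theorem summable_quadTerm (a b1 b2 : ℂ) {K ε : ℝ} (hK : 1 ≤ K) (hε : 0 ≤ ε)
    (h1 : ∀ n, ‖kc b1 n‖ ≤ K ^ n / (n.factorial : ℝ))
    (h2 : ∀ n, ‖kc b2 n‖ ≤ K ^ n / (n.factorial : ℝ))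
    (hKε : 4 * (‖a‖ + 1) * K * ε ≤ 1 / 2) {x y : ℂ} (hx : ‖x‖ ≤ ε) (hy : ‖y‖ ≤ ε) :
    Summable (quadTerm a b1 b2 x y) := by
  have he : ∀ n, ‖ec n‖ ≤ K ^ n / (n.factorial : ℝ) := fun n => by
    simp only [ec, norm_div, norm_pow, norm_neg, norm_one, one_pow, Complex.norm_natCast]
    gcongr
    exact one_le_pow₀ hK
  refine Summable.of_norm_bounded summable_half ?_
  rintro ⟨⟨n, m⟩, ⟨k, l⟩⟩
  have hf : ((n + m + (k + l)).factorial : ℝ) ≤ 4 ^ (n + m + (k + l)) *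
      (n.factorial * m.factorial * (k.factorial * l.factorial)) := by
    exact_mod_cast factorial_add_four_le n m k l
  simp only [quadTerm, norm_mul, norm_pow]
  calc _ ≤ ((‖a‖ + 1) ^ (n + m + (k + l)) * (4 ^ (n + m + (k + l)) *
      (n.factorial * m.factorial * (k.factorial * l.factorial)))) *
      ((K ^ n / n.factorial) * (K ^ m / m.factorial)) *
      ((K ^ k / k.factorial) * (K ^ l / l.factorial)) * (ε ^ n * ε ^ m) * (ε ^ k * ε ^ l) := by
        gcongr
        · exact (norm_poch_le a _).trans (by gcongr)
        · exact h1 n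
        · exact h2 m
        · exact he k
        · exact he l
    _ = (4 * (‖a‖ + 1) * K * ε) ^ (n + m + (k + l)) := by
        have h3 : (n.factorial : ℝ) ≠ 0 := by exact_mod_cast n.factorial_ne_zero
        have h4 : (m.factorial : ℝ) ≠ 0 := by exact_mod_cast m.factorial_ne_zero
        have h5 : (k.factorial : ℝ) ≠ 0 := by exact_mod_cast k.factorial_ne_zero
        have h6 : (l.factorial : ℝ) ≠ 0 := by exact_mod_cast l.factorial_ne_zero
        simp only [mul_pow, pow_add]
        field_simp
    _ ≤ _ := by gcongr

/-! ### The two evaluations of the quadruple series -/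

theorem hasSum_of_eq {β : Type*} {f g : β → ℂ} {s t : ℂ} (h : HasSum f s)
    (hfg : ∀ q, f q = g q) (hst : s = t) : HasSum g t := by
  obtain rfl := funext hfg
  exact hst ▸ h

/-- Summing over the binomial indices `k, l` first gives the `F2` side. -/
theorem hasSum_F2 {a b1 b2 x y S : ℂ} (hxy : ‖x‖ + ‖y‖ < 1)
    (hS : HasSum (quadTerm a b1 b2 x y) S) :
    S = (1 + x + y) ^ (-a) *
      F2 a b1 b2 (2 * b1) (2 * b2) (2 * x / (x + y + 1)) (2 * y / (x + y + 1)) := by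
  have hw : 1 + x + y ≠ 0 := fun h0 => by
    have h1 : x + y = -1 := by linear_combination h0
    have := norm_add_le x y
    rw [h1, norm_neg, norm_one] at this
    linarith
  have key : ∀ p : ℕ × ℕ, HasSum (fun q => quadTerm a b1 b2 x y (p, q))
      ((1 + x + y) ^ (-a) * (poch a (p.1 + p.2) * poch b1 p.1 * poch b2 p.2 /
        (poch (2 * b1) p.1 * poch (2 * b2) p.2 * (p.1.factorial : ℂ) * (p.2.factorial : ℂ)) *
        (2 * x / (x + y + 1)) ^ p.1 * (2 * y / (x + y + 1)) ^ p.2)) := by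
    rintro ⟨n, m⟩
    have h := (hasSum_binom_two (a + (n + m : ℕ)) x y hxy).mul_left
      (poch a (n + m) * (kc b1 n * kc b2 m) * (x ^ n * y ^ m))
    refine hasSum_of_eq h (fun q => ?_) ?_
    · simp only [quadTerm, poch_add a (n + m)]
      ring
    · rw [neg_add, ← sub_eq_add_neg, Complex.cpow_sub _ _ hw, Complex.cpow_natCast,
        show x + y + 1 = 1 + x + y by ring]
      simp only [kc, mul_pow, pow_add, div_eq_mul_inv, mul_inv]
      ring
  have h := hS.prod_fiberwise key
  rw [F2, ← tsum_mul_left]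
  exact h.tsum_eq.symm

/-- Collecting the powers `x ^ N y ^ M`, with `N = n + k` and `M = m + l`, gives the `F4` side. -/
theorem hasSum_F4 {a b1 b2 x y S : ℂ} (h1 : ∀ n : ℕ, b1 + 1/2 ≠ -(n : ℂ))
    (h2 : ∀ n : ℕ, b2 + 1/2 ≠ -(n : ℂ)) (h3 : ∀ n : ℕ, 2 * b1 ≠ -(n : ℂ))
    (h4 : ∀ n : ℕ, 2 * b2 ≠ -(n : ℂ))
    (hS : HasSum (quadTerm a b1 b2 x y) S) :
    S = F4 (a / 2) ((a + 1) / 2) (b1 + 1/2) (b2 + 1/2) (x^2) (y^2) := by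
  set G : ℕ × ℕ → ℂ := fun P => poch a (P.1 + P.2) * (kummerCoeff b1 P.1 * kummerCoeff b2 P.2) *
    (x ^ P.1 * y ^ P.2) with hG
  have hG' : HasSum G S := by
    -- Regroup the indices as `((n, k), (m, l))` and sum over the fibres of
    -- `(n + k, m + l) = (N, M)`.
    have hS' := ((Equiv.prodProdProdComm ℕ ℕ ℕ ℕ).hasSum_iff).2 hS
    have h := hS'.tsum_fiberwise (fun p => (p.1.1 + p.1.2, p.2.1 + p.2.2))
    refine hasSum_of_eq h ?_ rfl
    rintro ⟨N, M⟩
    have hset : Set.preimage (fun p : (ℕ × ℕ) × (ℕ × ℕ) => (p.1.1 + p.1.2, p.2.1 + p.2.2)) {(N, M)} =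
        ↑(Finset.HasAntidiagonal.antidiagonal N ×ˢ Finset.HasAntidiagonal.antidiagonal M) := by
      ext p; simp
    rw [hset, Finset.tsum_subtype', Finset.sum_product]
    simp only [hG, kummerCoeff]
    rw [Finset.sum_mul_sum, Finset.mul_sum, Finset.sum_mul]
    refine Finset.sum_congr rfl fun p hp => ?_
    rw [Finset.mul_sum, Finset.sum_mul]
    refine Finset.sum_congr rfl fun q hq => ?_
    obtain rfl := Finset.HasAntidiagonal.mem_antidiagonal.1 hp
    obtain rfl := Finset.HasAntidiagonal.mem_antidiagonal.1 hq
    simp only [Function.comp, Equiv.prodProdProdComm_apply, quadTerm]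
    rw [show p.1 + p.2 + (q.1 + q.2) = p.1 + q.1 + (p.2 + q.2) by ring]
    ring
  -- Only even powers of `x` and of `y` survive, so the sum runs over `(2n, 2m)`.
  have hinj : Function.Injective (fun P : ℕ × ℕ => (2 * P.1, 2 * P.2)) := by
    rintro ⟨n, m⟩ ⟨n', m'⟩ h
    simp only [Prod.mk.injEq] at h ⊢
    omega
  have hodd : ∀ P ∉ Set.range (fun P : ℕ × ℕ => (2 * P.1, 2 * P.2)), G P = 0 := by
    rintro ⟨N, M⟩ hP
    rcases Nat.even_or_odd' N with ⟨n, rfl | rfl⟩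
    · rcases Nat.even_or_odd' M with ⟨m, rfl | rfl⟩
      · exact absurd ⟨(n, m), rfl⟩ hP
      · simp [hG, kummerCoeff_odd h4]
    · simp [hG, kummerCoeff_odd h3]
  have h := (hinj.hasSum_iff hodd).2 hG'
  rw [← h.tsum_eq, F4]
  congr 1
  ext ⟨n, m⟩
  have e1 := kummerCoeff_even h3 h1 n
  have e2 := kummerCoeff_even h4 h2 m
  simp only [hG, Function.comp, ← mul_add, poch_two_mul]
  calc _ = poch (a / 2) (n + m) * poch ((a + 1) / 2) (n + m) *
        ((4 ^ n * kummerCoeff b1 (2 * n)) * (4 ^ m * kummerCoeff b2 (2 * m))) *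
        (x ^ (2 * n) * y ^ (2 * m)) := by rw [pow_add]; ring
    _ = _ := by
        rw [e1, e2, pow_mul, pow_mul]
        simp only [div_eq_mul_inv, mul_inv]
        ring

theorem F4_F2_quadratic (a b1 b2 : ℂ) (h1 : ∀ n : ℕ, b1 + 1/2 ≠ -(n : ℂ))
    (h2 : ∀ n : ℕ, b2 + 1/2 ≠ -(n : ℂ)) (h3 : ∀ n : ℕ, 2 * b1 ≠ -(n : ℂ))
    (h4 : ∀ n : ℕ, 2 * b2 ≠ -(n : ℂ)) :
    ∃ ε > (0 : ℝ), ∀ x y : ℂ, ‖x‖ < ε → ‖y‖ < ε →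
      F4 (a / 2) ((a + 1) / 2) (b1 + 1/2) (b2 + 1/2) (x^2) (y^2) =
        (1 + x + y) ^ (-a) *
          F2 a b1 b2 (2 * b1) (2 * b2) (2 * x / (x + y + 1)) (2 * y / (x + y + 1)) := by
  obtain ⟨K1, hK1, hb1⟩ := exists_kc_bound h3
  obtain ⟨K2, hK2, hb2⟩ := exists_kc_bound h4
  set K := K1 + K2 + 1 with hK
  have hK0 : 1 ≤ K := by linarith
  have hA : 1 ≤ ‖a‖ + 1 := by linarith [norm_nonneg a]
  have hAK : 1 ≤ (‖a‖ + 1) * K := one_le_mul_of_one_le_of_one_le hA hK0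
  have hε : 0 < 1 / (8 * ((‖a‖ + 1) * K)) := by positivity
  refine ⟨1 / (8 * ((‖a‖ + 1) * K)), hε, fun x y hx hy => ?_⟩
  -- The radius makes `4 (‖a‖ + 1) K ε = 1 / 2`.
  have hsum : Summable (quadTerm a b1 b2 x y) := by
    refine summable_quadTerm a b1 b2 hK0 hε.le (fun n => (hb1 n).trans ?_)
      (fun n => (hb2 n).trans ?_) ?_ hx.le hy.le
    · gcongr; linarith
    · gcongr; linarith
    · apply le_of_eq
      field_simp
      norm_num
  have hxy : ‖x‖ + ‖y‖ < 1 := by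
    have : 1 / (8 * ((‖a‖ + 1) * K)) ≤ 1 / 8 := by
      apply one_div_le_one_div_of_le <;> linarith
    linarith
  rw [← hasSum_F4 h1 h2 h3 h4 hsum.hasSum]
  exact hasSum_F2 hxy hsum.hasSum
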